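/- Let s ≥ 6 and d be positive integers, a_1 = 0, a_2, ..., a_s integers with gcd of the nonzero a_i equal to 1, and B_1, ..., B_s nonempty subsets of Z/dZ with 0 ∈ B_1 and |B_1| ≥ |B_i| for all i. Let B~ = ∪_{i=1}^s ({a_i} × B_i). If |B~ + B~| < 2.5 |B~|, then there exists a subgroup H of Z/dZ with |H| < (3/2)|B_1| such that every B_i is contained in a single coset of H. -/

import Mathlib

open Pointwise

/-!
Order the base `A = {a i}` and compare the fibres of `S + S` over `A + A` with those of `S`; let
`X₀` be the largest fibre of `S`, normalised to lie over `0`.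

If `2 |X + Y| < 2 |X| + |Y|` and `|X + Y| < 2 |Y| ≤ 2 |X|`, then every difference occurring in `X`
or `Y` occurs more than `|X| / 2` times in `X`, so `X - X = Y - Y` is a subgroup `H`, and counting
differences gives `|H| ≤ |X + Y|`. Moreover `|X + Y| ≥ 2 |X|` whenever `X` lies in a coset of a
subgroup and `Y` does not.

A lower bound for `|S + S|` comes from `A + A`: for a subset `T` of `A`, the points `x ≠ 0` shifted
by the endpoint of `T` on their own side are distinct and lie outside `T`. Taking `T = A` yields
`|S + S| ≥ |S| + (|A| - 1) |X₀|` even when each fibre of `S + S` is truncated at `|X₀|`, and it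
remains to find enough excess over `|X₀|` to reach `|S + S| ≥ 5/2 |S|`.

If `2 |X₀ + X₀| ≥ 3 |X₀|`, the excess comes from the set `T` over which the fibres are larger than
`2/3 |X₀|`. So `X₀` lies in a coset of a subgroup `H` with `|H| ≤ |X₀ + X₀| < 3/2 |X₀|`. Let `T` be
the set over which the fibres are not contained in cosets of `H`. Their sum with a fibre that is has
at least twice the size of the latter, which again gives enough excess unless `T` is empty.
-/

open scoped Finset

section Cosets

variable {G : Type*} [AddCommGroup G] {H : AddSubgroup G} {X Y : Finset G}

/-- The finite set `X` is contained in a single coset of the subgroup `H`. -/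
def LiesInCoset (H : AddSubgroup G) (X : Finset G) : Prop :=
  ∃ x, ∀ z ∈ X, z - x ∈ H

lemma liesInCoset_iff_forall_sub_mem : LiesInCoset H X ↔ ∀ x ∈ X, ∀ y ∈ X, x - y ∈ H := by
  constructor
  · rintro ⟨p, hp⟩ x hx y hy
    simpa using H.sub_mem (hp x hx) (hp y hy)
  · intro h
    rcases X.eq_empty_or_nonempty with rfl | ⟨y, hy⟩
    · exact ⟨0, by simp⟩
    · exact ⟨y, fun z hz ↦ h z hz y hy⟩

lemma LiesInCoset.card_le [Finite H] (hX : LiesInCoset H X) : #X ≤ Nat.card H := by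
  obtain ⟨p, hp⟩ := hX
  rw [← Fintype.card_coe X, ← Nat.card_eq_fintype_card]
  refine Nat.card_le_card_of_injective (fun z : X ↦ (⟨z - p, hp z z.2⟩ : H)) fun z w hzw ↦ ?_
  exact Subtype.ext (sub_left_injective (congrArg Subtype.val hzw))

variable [DecidableEq G]

lemma LiesInCoset.add (hX : LiesInCoset H X) (hY : LiesInCoset H Y) : LiesInCoset H (X + Y) := by
  obtain ⟨p, hp⟩ := hX
  obtain ⟨q, hq⟩ := hY
  refine ⟨p + q, fun z hz ↦ ?_⟩
  obtain ⟨x, hx, y, hy, rfl⟩ := Finset.mem_add.1 hz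
  rw [add_sub_add_comm]
  exact H.add_mem (hp x hx) (hq y hy)

lemma LiesInCoset.two_mul_card_le_card_add (hX : LiesInCoset H X) (hY : ¬ LiesInCoset H Y) :
    2 * #X ≤ #(X + Y) := by
  rw [liesInCoset_iff_forall_sub_mem] at hX hY
  push Not at hY
  obtain ⟨y, hy, y', hy', hyy'⟩ := hY
  have hdisj : Disjoint (X + {y}) (X + {y'}) := by
    simp only [Finset.disjoint_left, Finset.mem_add, Finset.mem_singleton]
    rintro _ ⟨x, hx, _, rfl, rfl⟩ ⟨x', hx', _, rfl, h⟩
    refine hyy' ?_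
    convert hX x' hx' x hx using 1
    rw [sub_eq_sub_iff_add_eq_add, h, add_comm]
  calc 2 * #X = #((X + {y}) ∪ (X + {y'})) := by
        rw [Finset.card_union_of_disjoint hdisj, Finset.card_add_singleton,
          Finset.card_add_singleton, two_mul]
    _ ≤ #(X + Y) := by
        rw [← Finset.add_union]
        gcongr
        exact Finset.union_subset (by simpa) (by simpa)

lemma LiesInCoset.card_le_card_add [Finite H] (hX : LiesInCoset H X) (hY : LiesInCoset H Y)
    (hcard : Nat.card H < #X + #Y) : Nat.card H ≤ #(X + Y) := by
  obtain ⟨p, hp⟩ := hX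
  obtain ⟨q, hq⟩ := hY
  have hmem (h : H) : (h : G) + (p + q) ∈ X + Y := by
    by_contra hnot
    have hdisj : Disjoint X (((h : G) + (p + q)) +ᵥ -Y) := by
      rwa [Finset.disjoint_iff_inter_eq_empty, ← Finset.card_eq_zero, Finset.card_inter_vadd_neg,
        Finset.addConvolution_eq_zero]
    have hcoset : LiesInCoset H (X ∪ (((h : G) + (p + q)) +ᵥ -Y)) := by
      refine ⟨p, fun z hz ↦ ?_⟩
      rcases Finset.mem_union.1 hz with hz | hz
      · exact hp z hz
      · obtain ⟨w, hw, rfl⟩ := Finset.mem_vadd_finset.1 hz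
        convert H.sub_mem h.2 (hq (-w) (Finset.mem_neg'.1 hw)) using 1
        rw [vadd_eq_add]
        abel
    have := hcoset.card_le
    rw [Finset.card_union_of_disjoint hdisj, Finset.card_vadd_finset, Finset.card_neg] at this
    exact this.not_gt hcard
  rw [← Fintype.card_coe (X + Y), ← Nat.card_eq_fintype_card]
  refine Nat.card_le_card_of_injective (fun h : H ↦ (⟨_, hmem h⟩ : ↥(X + Y))) fun h h' hh' ↦ ?_
  exact Subtype.ext (add_left_injective _ (congrArg Subtype.val hh'))

end Cosets

section PopularDifferences

variable {G : Type*} [AddCommGroup G] [DecidableEq G] {X Y : Finset G}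

lemma two_mul_card_le_card_add_add_card_inter_vadd {d : G} (hd : d ∈ Y - Y) :
    2 * #X ≤ #(X + Y) + #(X ∩ (d +ᵥ X)) := by
  obtain ⟨y, hy, y', hy', rfl⟩ := Finset.mem_sub.1 hd
  have hsub {z : G} (hz : z ∈ Y) : z +ᵥ X ⊆ X + Y := by
    rw [add_comm X]
    exact Finset.vadd_finset_subset_add hz
  have hinter : #((y' +ᵥ X) ∩ (y +ᵥ X)) = #(X ∩ ((y - y') +ᵥ X)) := by
    rw [Finset.card_vadd_inter_vadd, Finset.card_inter_vadd, neg_add_eq_sub]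
  calc 2 * #X = #((y' +ᵥ X) ∪ (y +ᵥ X)) + #((y' +ᵥ X) ∩ (y +ᵥ X)) := by
        rw [Finset.card_union_add_card_inter, Finset.card_vadd_finset, Finset.card_vadd_finset,
          two_mul]
    _ ≤ #(X + Y) + #(X ∩ ((y - y') +ᵥ X)) := by
        rw [hinter]
        gcongr
        exact Finset.union_subset (hsub hy') (hsub hy)

lemma sub_self_subset_sub_self_of_card_add_lt (h : #(X + Y) < 2 * #X) : Y - Y ⊆ X - X := by
  intro d hd
  have hpos : 0 < #(X ∩ (d +ᵥ X)) := by
    have := two_mul_card_le_card_add_add_card_inter_vadd (X := X) hd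
    lia
  rwa [Finset.card_inter_vadd, Finset.addConvolution_pos, ← sub_eq_add_neg] at hpos

lemma card_sub_self_mul_le {k : ℕ} (h : ∀ d ∈ X - X, k ≤ #(X ∩ (d +ᵥ X))) :
    #(X - X) * k ≤ #X * #X := by
  calc #(X - X) * k ≤ ∑ d ∈ X - X, #(X ∩ (d +ᵥ X)) := Finset.card_nsmul_le_sum _ _ _ h
    _ = ∑ d ∈ X - X, #{p ∈ X ×ˢ X | p.1 - p.2 = d} := by
        simp only [Finset.card_inter_vadd, Finset.card_sub_eq]
    _ = #X * #X := by
        rw [← Finset.card_product]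
        refine (Finset.card_eq_sum_card_fiberwise fun p hp ↦ ?_).symm
        rw [Finset.mem_coe, Finset.mem_product] at hp
        exact Finset.sub_mem_sub hp.1 hp.2

-- Two popular differences `d` and `d'` have a common base point, which exhibits `d - d'`.
lemma exists_addSubgroup_coe_eq_sub_self (hX : X.Nonempty)
    (h : ∀ d ∈ X - X, #X < 2 * #(X ∩ (d +ᵥ X))) :
    ∃ H : AddSubgroup G, (H : Set G) = ↑(X - X) := by
  refine ⟨AddSubgroup.ofSub ↑(X - X) (by simpa using hX.sub hX) fun d hd d' hd' ↦ ?_, rfl⟩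
  have hrep (e : G) (he : e ∈ X - X) : #X < 2 * #(X ∩ (-e +ᵥ X)) := by
    have := h (-e) (by simpa [neg_sub] using Finset.neg_mem_neg he)
    lia
  obtain ⟨x, hx⟩ := Finset.inter_nonempty_of_card_lt_card_add_card
    (s := X) (t := X ∩ (-d +ᵥ X)) (u := X ∩ (-d' +ᵥ X)) Finset.inter_subset_left
    Finset.inter_subset_left (by have := hrep d hd; have := hrep d' hd'; lia)
  simp only [Finset.mem_inter, Finset.mem_neg_vadd_finset_iff, vadd_eq_add] at hx
  rw [Finset.mem_coe, ← sub_eq_add_neg, ← add_sub_add_right_eq_sub d d' x]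
  exact Finset.sub_mem_sub hx.1.2 hx.2.2

theorem exists_addSubgroup_of_card_add_lt (hYX : #Y ≤ #X) (h₁ : 2 * #(X + Y) < 2 * #X + #Y)
    (h₂ : #(X + Y) < 2 * #Y) :
    ∃ H : AddSubgroup G, Finite H ∧ Nat.card H ≤ #(X + Y) ∧ LiesInCoset H X ∧
      LiesInCoset H Y := by
  have hXY : X - X = Y - Y := Finset.Subset.antisymm
    (sub_self_subset_sub_self_of_card_add_lt (by rwa [add_comm]))
    (sub_self_subset_sub_self_of_card_add_lt (by lia))
  have hpop : ∀ d ∈ X - X, 2 * #X - #(X + Y) ≤ #(X ∩ (d +ᵥ X)) := fun d hd ↦ by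
    have := two_mul_card_le_card_add_add_card_inter_vadd (X := X) (hXY ▸ hd)
    lia
  obtain ⟨H, hH⟩ := exists_addSubgroup_coe_eq_sub_self (Finset.card_pos.1 (by lia))
    fun d hd ↦ (by lia : #X < 2 * (2 * #X - #(X + Y))).trans_le (by gcongr; exact hpop d hd)
  have hfin : Finite H := Set.Finite.to_subtype (hH ▸ (X - X).finite_toSet)
  have hcard : Nat.card H = #(X - X) := by
    rw [← Set.ncard_coe_finset, ← hH]; rfl
  have hX : LiesInCoset H X := liesInCoset_iff_forall_sub_mem.2 fun x hx x' hx' ↦ by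
    rw [← SetLike.mem_coe, hH]
    exact Finset.sub_mem_sub hx hx'
  have hY : LiesInCoset H Y := liesInCoset_iff_forall_sub_mem.2 fun y hy y' hy' ↦ by
    rw [← SetLike.mem_coe, hH, hXY]
    exact Finset.sub_mem_sub hy hy'
  refine ⟨H, hfin, ?_, hX, hY⟩
  by_contra! hlt
  have hle : #X + #Y ≤ #(X - X) := by
    by_contra! h
    exact hlt.not_ge (hX.card_le_card_add hY (by lia))
  have hcount := card_sub_self_mul_le hpop
  obtain ⟨k, hk⟩ : ∃ k, 2 * #X = #(X + Y) + k := ⟨2 * #X - #(X + Y), by lia⟩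
  have hk' : 2 * #X - #(X + Y) = k := by lia
  rw [hk'] at hcount
  nlinarith

end PopularDifferences

section OutwardShifts

lemma sum_add_sum_comp_le_sum {α β M : Type*} [AddCommMonoid M] [PartialOrder M]
    [IsOrderedAddMonoid M] {W P : Finset β} {X : Finset α} {g : α → β} {f : β → M}
    (hf : ∀ c ∈ W, 0 ≤ f c) (hPW : P ⊆ W) (hg : Set.InjOn g X) (hgW : ∀ x ∈ X, g x ∈ W)
    (hgP : ∀ x ∈ X, g x ∉ P) :
    ∑ c ∈ P, f c + ∑ x ∈ X, f (g x) ≤ ∑ c ∈ W, f c := by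
  classical
  have hdisj : Disjoint P (X.image g) := by
    simpa [Finset.disjoint_right] using hgP
  rw [← Finset.sum_image hg, ← Finset.sum_union hdisj]
  exact Finset.sum_le_sum_of_subset_of_nonneg
    (Finset.union_subset hPW (Finset.image_subset_iff.2 hgW)) fun c hc _ ↦ hf c hc

section FarEnd

variable {Z : Type*} [Zero Z] [LinearOrder Z] {Y : Finset Z} {hY : Y.Nonempty} {x : Z}

/-- The endpoint of `Y` in the direction of `x`, so that the translation by `farEnd Y hY x`
carries `x` beyond `Y`. The value at `x = 0` is irrelevant. -/
def farEnd (Y : Finset Z) (hY : Y.Nonempty) (x : Z) : Z :=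
  if 0 < x then Y.max' hY else Y.min' hY

lemma farEnd_mem : farEnd Y hY x ∈ Y := by
  unfold farEnd
  split_ifs
  exacts [Y.max'_mem hY, Y.min'_mem hY]

lemma exists_farEnd_eq_self (hx : x ∈ Y) (hx0 : x ≠ 0) :
    ∃ z ∈ Y, z ≠ 0 ∧ farEnd Y hY z = z := by
  rcases hx0.lt_or_gt with hneg | hpos
  · have hmin : Y.min' hY < 0 := (Y.min'_le x hx).trans_lt hneg
    exact ⟨_, Y.min'_mem hY, hmin.ne, if_neg hmin.not_gt⟩
  · have hmax : 0 < Y.max' hY := hpos.trans_le (Y.le_max' x hx)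
    exact ⟨_, Y.max'_mem hY, hmax.ne', if_pos hmax⟩

lemma exists_erase_zero_eq_pair_farEnd_eq_self (hcard : #Y = 3) (h0 : 0 ∈ Y) :
    ∃ x z, x ≠ z ∧ Y.erase 0 = {x, z} ∧ farEnd Y hY x = x := by
  have herase : #(Y.erase 0) = 2 := by rw [Finset.card_erase_of_mem h0, hcard]
  obtain ⟨w, hw⟩ : (Y.erase 0).Nonempty := Finset.card_pos.1 (by lia)
  obtain ⟨x, hxY, hx0, hx⟩ := exists_farEnd_eq_self (hY := hY) (Finset.mem_of_mem_erase hw)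
    (Finset.ne_of_mem_erase hw)
  have hxe : x ∈ Y.erase 0 := Finset.mem_erase.2 ⟨hx0, hxY⟩
  obtain ⟨z, hz⟩ : ∃ z, (Y.erase 0).erase x = {z} :=
    Finset.card_eq_one.1 (by rw [Finset.card_erase_of_mem hxe, herase])
  have hzx : z ∈ (Y.erase 0).erase x := hz ▸ Finset.mem_singleton_self z
  exact ⟨x, z, (Finset.ne_of_mem_erase hzx).symm, by rw [← hz, Finset.insert_erase hxe], hx⟩

end FarEnd

variable {Z : Type*} [AddCommMonoid Z] [LinearOrder Z] [IsOrderedCancelAddMonoid Z]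
  {Y : Finset Z} {hY : Y.Nonempty} {x : Z}

lemma add_farEnd_notMem (hx : x ≠ 0) : x + farEnd Y hY x ∉ Y := by
  intro hmem
  rcases hx.lt_or_gt with hneg | hpos
  · rw [farEnd, if_neg hneg.not_gt] at hmem
    exact (Y.min'_le _ hmem).not_gt (add_lt_of_neg_left _ hneg)
  · rw [farEnd, if_pos hpos] at hmem
    exact (Y.le_max' _ hmem).not_gt (lt_add_of_pos_left _ hpos)

lemma injOn_add_farEnd : Set.InjOn (fun x ↦ x + farEnd Y hY x) {0}ᶜ := by
  have hlt {x x' : Z} (hx : x < 0) (hx' : 0 < x') : x + Y.min' hY < x' + Y.max' hY :=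
    add_lt_add_of_lt_of_le (hx.trans hx') (Y.min'_le_max' hY)
  intro x hx x' hx' h
  simp only [farEnd] at h
  rcases lt_or_gt_of_ne hx with hneg | hpos <;> rcases lt_or_gt_of_ne hx' with hneg' | hpos'
  · simpa only [if_neg hneg.not_gt, if_neg hneg'.not_gt, add_left_inj] using h
  · rw [if_neg hneg.not_gt, if_pos hpos'] at h
    exact absurd h (hlt hneg hpos').ne
  · rw [if_pos hpos, if_neg hneg'.not_gt] at h
    exact absurd h (hlt hneg' hpos).ne'
  · simpa only [if_pos hpos, if_pos hpos', add_left_inj] using h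

end OutwardShifts

section Weights

variable {𝕜 Z : Type*} [Field 𝕜] [LinearOrder 𝕜] [AddCommMonoid Z] {A : Finset Z} {y F : Z → 𝕜}

/-- An abstraction of the fibre sizes `y` of a set lying over `A` and the fibre sizes `F` of its
sumset: the fibre over `0` is the largest one, and the fibre of the sumset over `i + j` is at
least as large as the fibre over `i`. -/
structure IsSumsetWeight (A : Finset Z) (y F : Z → 𝕜) : Prop where
  zero_mem : 0 ∈ A
  nonneg : ∀ x ∈ A, 0 ≤ y x
  le_zero : ∀ x ∈ A, y x ≤ y 0
  le_add : ∀ i ∈ A, ∀ j ∈ A, y i ≤ F (i + j)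

/-- A sumset weight modelling a set whose largest fibre is not close to a coset. The alternatives
`2 * y i ≤ F i` occur when the fibre over `i` lies in a coset of a subgroup while the fibre over `0`
does not. -/
structure IsSpreadWeight (A : Finset Z) (y F : Z → 𝕜) : Prop extends IsSumsetWeight A y F where
  spread_zero : ∀ x ∈ A, y 0 + y x / 2 ≤ F x ∨ 2 * y x ≤ F x
  spread_add : ∀ i ∈ A, ∀ j ∈ A, y j ≤ y i → 2 * y 0 < 3 * y j →
    y i + y j / 2 ≤ F (i + j) ∨ 2 * y i ≤ F i ∧ 2 * y j ≤ F j

/-- The points of `A` whose fibre exceeds two thirds of the fibre over `0`. -/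
def largePart (A : Finset Z) (y : Z → 𝕜) : Finset Z := {x ∈ A | 2 * y 0 < 3 * y x}

/-- The excess of `F` over `y 0`, corrected on `A` in such a way that the bound
`5 * ∑ x ∈ A, y x ≤ 2 * ∑ c ∈ A + A, F c` follows as soon as the surpluses add up to `y 0`. -/
def surplus [DecidableEq Z] (A : Finset Z) (y F : Z → 𝕜) (c : Z) : 𝕜 :=
  (F c - y 0)⁺ + if c ∈ A then y 0 - 3 / 2 * y c else 0

lemma mem_largePart {x : Z} : x ∈ largePart A y ↔ x ∈ A ∧ 2 * y 0 < 3 * y x :=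
  Finset.mem_filter

lemma largePart_subset : largePart A y ⊆ A := Finset.filter_subset _ _

lemma surplus_of_notMem [DecidableEq Z] {c : Z} (hc : c ∉ A) : surplus A y F c = (F c - y 0)⁺ := by
  rw [surplus, if_neg hc, add_zero]

variable [IsStrictOrderedRing 𝕜]

lemma IsSumsetWeight.zero_mem_largePart (h : IsSumsetWeight A y F) (hL : (largePart A y).Nonempty) :
    0 ∈ largePart A y := by
  obtain ⟨x, hx⟩ := hL
  rw [mem_largePart] at hx ⊢
  exact ⟨h.zero_mem, by linarith [h.le_zero x hx.1]⟩

section Surplus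

variable [DecidableEq Z]

lemma le_surplus_of_mem {c : Z} (hc : c ∈ A) : F c - 3 / 2 * y c ≤ surplus A y F c := by
  rw [surplus, if_pos hc]
  linarith [le_posPart (F c - y 0)]

lemma sub_le_surplus_of_mem {c : Z} (hc : c ∈ A) : y 0 - 3 / 2 * y c ≤ surplus A y F c := by
  rw [surplus, if_pos hc]
  linarith [posPart_nonneg (F c - y 0)]

namespace IsSpreadWeight

variable (h : IsSpreadWeight A y F) {x z : Z}
include h

lemma half_le_surplus (hx : x ∈ A \ largePart A y) : y x / 2 ≤ surplus A y F x := by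
  simp only [Finset.mem_sdiff, mem_largePart, not_and, not_lt] at hx
  have := le_surplus_of_mem (y := y) (F := F) hx.1
  rcases h.spread_zero x hx.1 with hF | hF <;> linarith [hx.2 hx.1]

lemma quarter_le_surplus (hx : x ∈ A \ largePart A y) : y 0 / 4 ≤ surplus A y F x := by
  linarith [h.half_le_surplus hx,
    sub_le_surplus_of_mem (y := y) (F := F) (Finset.mem_sdiff.1 hx).1]

lemma sub_le_surplus (hx : x ∈ largePart A y) : y 0 - y x ≤ surplus A y F x := by
  rw [mem_largePart] at hx
  have := le_surplus_of_mem (y := y) (F := F) hx.1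
  rcases h.spread_zero x hx.1 with hF | hF <;> linarith

lemma surplus_nonneg (c : Z) : 0 ≤ surplus A y F c := by
  by_cases hcA : c ∈ A
  · by_cases hcL : c ∈ largePart A y
    · linarith [h.sub_le_surplus hcL, h.le_zero c hcA]
    · linarith [h.half_le_surplus (Finset.mem_sdiff.2 ⟨hcA, hcL⟩), h.nonneg c hcA]
  · rw [surplus_of_notMem hcA]
    exact posPart_nonneg _

lemma third_le_surplus_or_max_add_le (hx : x ∈ largePart A y) (hz : z ∈ largePart A y) :
    y 0 / 3 ≤ surplus A y F x ∨ max (y x) (y z) + min (y x) (y z) / 2 ≤ F (x + z) := by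
  rw [mem_largePart] at hx hz
  have hdouble (hF : 2 * y x ≤ F x) : y 0 / 3 ≤ surplus A y F x := by
    linarith [le_surplus_of_mem (y := y) (F := F) hx.1]
  rcases le_total (y x) (y z) with hle | hle
  · rw [max_eq_right hle, min_eq_left hle, add_comm x]
    exact (h.spread_add z hz.1 x hx.1 hle hx.2).symm.imp_left fun hF ↦ hdouble hF.2
  · rw [max_eq_left hle, min_eq_right hle]
    exact (h.spread_add x hx.1 z hz.1 hle hz.2).symm.imp_left fun hF ↦ hdouble hF.1

lemma third_le_surplus_add (hx : x ∈ largePart A y) (hz : z ∈ largePart A y)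
    (hxz : x + z ∉ largePart A y) :
    y 0 / 3 ≤ surplus A y F x + surplus A y F (x + z) := by
  rcases h.third_le_surplus_or_max_add_le hx hz with hthird | hF
  · linarith [h.surplus_nonneg (x + z)]
  have hxle := h.le_zero x (largePart_subset hx)
  have hxsurplus := h.sub_le_surplus hx
  rw [mem_largePart] at hx hz
  by_cases hA : x + z ∈ A
  · have := h.half_le_surplus (Finset.mem_sdiff.2 ⟨hA, hxz⟩)
    have := le_surplus_of_mem (y := y) (F := F) hA
    rcases le_total (y x) (y z) with hle | hle
    · rw [max_eq_right hle, min_eq_left hle] at hF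
      linarith
    · rw [max_eq_left hle, min_eq_right hle] at hF
      linarith
  · rw [surplus_of_notMem hA]
    have := le_posPart (F (x + z) - y 0)
    rcases le_total (y x) (y z) with hle | hle
    · rw [max_eq_right hle, min_eq_left hle] at hF
      linarith
    · rw [max_eq_left hle, min_eq_right hle] at hF
      linarith

lemma four_ninths_le_surplus_add_self (hx : x ∈ largePart A y)
    (hxx : x + x ∈ A \ largePart A y) :
    4 / 9 * y 0 ≤ surplus A y F x + surplus A y F (x + x) := by
  have hquarter := h.quarter_le_surplus hxx
  rcases h.third_le_surplus_or_max_add_le hx hx with hthird | hF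
  · linarith [h.nonneg 0 h.zero_mem]
  have hhalf := h.half_le_surplus hxx
  have hxsurplus := h.sub_le_surplus hx
  rw [max_self, min_self] at hF
  simp only [Finset.mem_sdiff, mem_largePart, not_and, not_lt] at hxx
  linarith [le_surplus_of_mem (y := y) (F := F) hxx.1, hxx.2 hxx.1]

lemma le_sum_surplus_of_card_largePart_le_two (hA : 6 ≤ #A) (hL : #(largePart A y) ≤ 2) :
    y 0 ≤ ∑ c ∈ A + A, surplus A y F c := by
  have hcard : 4 ≤ #(A \ largePart A y) := by
    rw [Finset.card_sdiff_of_subset largePart_subset]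
    lia
  calc y 0 = 4 • (y 0 / 4) := by rw [nsmul_eq_mul, Nat.cast_ofNat]; ring
    _ ≤ #(A \ largePart A y) • (y 0 / 4) :=
        nsmul_le_nsmul_left (div_nonneg (h.nonneg 0 h.zero_mem) zero_le_four) hcard
    _ ≤ ∑ c ∈ A \ largePart A y, surplus A y F c :=
        Finset.card_nsmul_le_sum _ _ _ fun c hc ↦ h.quarter_le_surplus hc
    _ ≤ ∑ c ∈ A + A, surplus A y F c :=
        Finset.sum_le_sum_of_subset_of_nonneg
          (Finset.sdiff_subset.trans (Finset.subset_add_left A h.zero_mem))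
          fun c _ _ ↦ h.surplus_nonneg c

end IsSpreadWeight

end Surplus

variable [LinearOrder Z] [IsOrderedCancelAddMonoid Z]

namespace IsSumsetWeight

-- The sums `x` and `x + farEnd A _ x`, of which only `0 + farEnd A _ 0` may be repeated, are
-- `2 * #A - 1` distinct elements of `A + A`.
lemma sum_add_le_sum_min (h : IsSumsetWeight A y F) :
    ∑ x ∈ A, y x + (#A - 1) * y 0 ≤ ∑ c ∈ A + A, min (F c) (y 0) := by
  have hA : A.Nonempty := ⟨0, h.zero_mem⟩
  have hnonneg : ∀ c ∈ A + A, 0 ≤ min (F c) (y 0) := fun c hc ↦ by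
    obtain ⟨i, hi, j, hj, rfl⟩ := Finset.mem_add.1 hc
    exact le_min ((h.nonneg i hi).trans (h.le_add i hi j hj)) (h.nonneg 0 h.zero_mem)
  have hshift := sum_add_sum_comp_le_sum (P := A) (X := A.erase 0)
    (g := fun x ↦ x + farEnd A hA x) hnonneg (Finset.subset_add_left A h.zero_mem)
    (injOn_add_farEnd.mono fun x hx ↦ Finset.ne_of_mem_erase hx)
    (fun x hx ↦ Finset.add_mem_add (Finset.mem_of_mem_erase hx) farEnd_mem)
    (fun x hx ↦ add_farEnd_notMem (Finset.ne_of_mem_erase hx))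
  have hself : #A * y 0 ≤ ∑ x ∈ A, min (F x) (y 0) := by
    rw [← nsmul_eq_mul]
    refine Finset.card_nsmul_le_sum _ _ _ fun x hx ↦ le_min ?_ le_rfl
    simpa using h.le_add 0 h.zero_mem x hx
  have hfar : ∑ x ∈ A.erase 0, y x ≤ ∑ x ∈ A.erase 0, min (F (x + farEnd A hA x)) (y 0) :=
    Finset.sum_le_sum fun x hx ↦
      have hxA := Finset.mem_of_mem_erase hx
      le_min (h.le_add x hxA _ farEnd_mem) (h.le_zero x hxA)
  linarith [Finset.sum_erase_add _ y h.zero_mem]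

lemma five_mul_sum_le_of_le_sum_posPart (h : IsSumsetWeight A y F)
    (hexcess : 3 * ∑ x ∈ A, y x ≤ 2 * (#A - 1) * y 0 + 2 * ∑ c ∈ A + A, (F c - y 0)⁺) :
    5 * ∑ x ∈ A, y x ≤ 2 * ∑ c ∈ A + A, F c := by
  have hsplit : ∑ c ∈ A + A, min (F c) (y 0) =
      ∑ c ∈ A + A, F c - ∑ c ∈ A + A, (F c - y 0)⁺ := by
    simp only [inf_eq_sub_posPart_sub, Finset.sum_sub_distrib]
  linarith [h.sum_add_le_sum_min]

theorem five_mul_sum_le_of_two_mul_le {T : Finset Z} (h : IsSumsetWeight A y F) (hA : 6 ≤ #A)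
    (hTA : T ⊆ A) (hT : T.Nonempty) (h0T : 0 ∉ T)
    (hTF : ∀ i ∈ A \ T, ∀ j ∈ T, 2 * y i ≤ F (i + j)) :
    5 * ∑ x ∈ A, y x ≤ 2 * ∑ c ∈ A + A, F c := by
  have h0 : 0 ∈ A \ T := Finset.mem_sdiff.2 ⟨h.zero_mem, h0T⟩
  have hshift := sum_add_sum_comp_le_sum (P := T) (X := (A \ T).erase 0)
    (g := fun x ↦ x + farEnd T hT x) (W := A + A) (fun c _ ↦ posPart_nonneg (F c - y 0))
    (hTA.trans (Finset.subset_add_left A h.zero_mem))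
    (injOn_add_farEnd.mono fun x hx ↦ Finset.ne_of_mem_erase hx)
    (fun x hx ↦ Finset.add_mem_add (Finset.mem_sdiff.1 (Finset.mem_of_mem_erase hx)).1
      (hTA farEnd_mem))
    (fun x hx ↦ add_farEnd_notMem (Finset.ne_of_mem_erase hx))
  have hself : #T * y 0 ≤ ∑ x ∈ T, (F x - y 0)⁺ := by
    rw [← nsmul_eq_mul]
    refine Finset.card_nsmul_le_sum _ _ _ fun x hx ↦ ?_
    have := hTF 0 h0 x hx
    rw [zero_add] at this
    linarith [le_posPart (F x - y 0)]
  have hfar : ∑ x ∈ (A \ T).erase 0, (3 / 2 * y x - 3 / 4 * y 0) ≤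
      ∑ x ∈ (A \ T).erase 0, (F (x + farEnd T hT x) - y 0)⁺ :=
    Finset.sum_le_sum fun x hx ↦ by
      have := hTF x (Finset.mem_of_mem_erase hx) _ (farEnd_mem (hY := hT) (x := x))
      linarith [le_posPart (F (x + farEnd T hT x) - y 0),
        posPart_nonneg (F (x + farEnd T hT x) - y 0)]
  have hTle : ∑ x ∈ T, y x ≤ #T * y 0 := by
    rw [← nsmul_eq_mul]
    exact Finset.sum_le_card_nsmul _ _ _ fun x hx ↦ h.le_zero x (hTA hx)
  rw [Finset.sum_sub_distrib, ← Finset.mul_sum, Finset.sum_const, nsmul_eq_mul,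
    Finset.cast_card_erase_of_mem h0, Finset.cast_card_sdiff hTA] at hfar
  have hcard : 0 ≤ ((#A : 𝕜) + #T - 7) * y 0 := by
    have : (7 : 𝕜) ≤ #A + #T := by exact_mod_cast add_le_add hA hT.card_pos
    exact mul_nonneg (by linarith) (h.nonneg 0 h.zero_mem)
  apply h.five_mul_sum_le_of_le_sum_posPart
  linarith [Finset.sum_erase_add _ y h0, Finset.sum_sdiff (f := y) hTA]

lemma five_mul_sum_le_of_le_sum_surplus (h : IsSumsetWeight A y F)
    (hsurplus : y 0 ≤ ∑ c ∈ A + A, surplus A y F c) :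
    5 * ∑ x ∈ A, y x ≤ 2 * ∑ c ∈ A + A, F c := by
  have hcorrection : ∑ c ∈ A + A, (if c ∈ A then y 0 - 3 / 2 * y c else 0) =
      #A * y 0 - 3 / 2 * ∑ x ∈ A, y x := by
    rw [← Finset.sum_filter, Finset.filter_mem_eq_inter,
      Finset.inter_eq_right.2 (Finset.subset_add_left A h.zero_mem), Finset.sum_sub_distrib,
      ← Finset.mul_sum, Finset.sum_const, nsmul_eq_mul]
  simp only [surplus, Finset.sum_add_distrib, hcorrection] at hsurplus
  apply h.five_mul_sum_le_of_le_sum_posPart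
  linarith

end IsSumsetWeight

namespace IsSpreadWeight

variable (h : IsSpreadWeight A y F) {x z : Z}
include h

lemma sum_surplus_add_card_mul_le {R : Finset Z} (hL : (largePart A y).Nonempty)
    (hR : R ⊆ A \ largePart A y)
    (hfar : ∀ x ∈ (largePart A y).erase 0, x + farEnd (largePart A y) hL x ∉ R) :
    ∑ x ∈ (largePart A y).erase 0,
        (surplus A y F x + surplus A y F (x + farEnd (largePart A y) hL x)) + #R * (y 0 / 4) ≤
      ∑ c ∈ A + A, surplus A y F c := by
  set L := largePart A y
  have hLA : L ⊆ A := largePart_subset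
  have hdisj : Disjoint (L.erase 0) R :=
    (Finset.disjoint_sdiff.mono_left (Finset.erase_subset 0 L)).mono_right hR
  have hshift := sum_add_sum_comp_le_sum (P := L.erase 0 ∪ R) (X := L.erase 0)
    (g := fun x ↦ x + farEnd L hL x) (fun c (_ : c ∈ A + A) ↦ h.surplus_nonneg c)
    ((Finset.union_subset ((Finset.erase_subset 0 L).trans hLA)
      (hR.trans Finset.sdiff_subset)).trans (Finset.subset_add_left A h.zero_mem))
    (injOn_add_farEnd.mono fun x hx ↦ Finset.ne_of_mem_erase hx)
    (fun x hx ↦ Finset.add_mem_add (hLA (Finset.mem_of_mem_erase hx)) (hLA farEnd_mem))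
    (fun x hx hmem ↦ (Finset.mem_union.1 hmem).elim
      (fun hmem ↦ add_farEnd_notMem (Finset.ne_of_mem_erase hx) (Finset.mem_of_mem_erase hmem))
      (hfar x hx))
  have hquarter : #R * (y 0 / 4) ≤ ∑ c ∈ R, surplus A y F c := by
    rw [← nsmul_eq_mul]
    exact Finset.card_nsmul_le_sum _ _ _ fun c hc ↦ h.quarter_le_surplus (hR hc)
  rw [Finset.sum_union hdisj] at hshift
  rw [Finset.sum_add_distrib]
  linarith

lemma third_le_surplus_add_farEnd (hL : (largePart A y).Nonempty)
    (hx : x ∈ (largePart A y).erase 0) :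
    y 0 / 3 ≤ surplus A y F x + surplus A y F (x + farEnd (largePart A y) hL x) :=
  h.third_le_surplus_add (Finset.mem_of_mem_erase hx) farEnd_mem
    (add_farEnd_notMem (Finset.ne_of_mem_erase hx))

lemma le_sum_surplus_of_four_le_card_largePart (hL : 4 ≤ #(largePart A y)) :
    y 0 ≤ ∑ c ∈ A + A, surplus A y F c := by
  have hne : (largePart A y).Nonempty := Finset.card_pos.1 (by lia)
  have hcard : 3 ≤ #((largePart A y).erase 0) := by
    rw [Finset.card_erase_of_mem (h.zero_mem_largePart hne)]
    lia
  have hsum := h.sum_surplus_add_card_mul_le hne (Finset.empty_subset _) (by simp)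
  simp only [Finset.card_empty, Nat.cast_zero, zero_mul, add_zero] at hsum
  calc y 0 = 3 • (y 0 / 3) := by rw [nsmul_eq_mul, Nat.cast_ofNat]; ring
    _ ≤ #((largePart A y).erase 0) • (y 0 / 3) :=
        nsmul_le_nsmul_left (div_nonneg (h.nonneg 0 h.zero_mem) zero_le_three) hcard
    _ ≤ _ := Finset.card_nsmul_le_sum _ _ _ fun x hx ↦ h.third_le_surplus_add_farEnd hne hx
    _ ≤ ∑ c ∈ A + A, surplus A y F c := hsum

lemma le_sum_surplus_of_card_largePart_eq_three (hA : 6 ≤ #A) (hL : #(largePart A y) = 3) :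
    y 0 ≤ ∑ c ∈ A + A, surplus A y F c := by
  have hne : (largePart A y).Nonempty := Finset.card_pos.1 (by lia)
  obtain ⟨x, z, hxz, hpair, hfar⟩ :=
    exists_erase_zero_eq_pair_farEnd_eq_self (hY := hne) hL (h.zero_mem_largePart hne)
  have hx : x ∈ (largePart A y).erase 0 := by simp [hpair]
  have hz : z ∈ (largePart A y).erase 0 := by simp [hpair]
  set w := z + farEnd (largePart A y) hne z
  set R := (A \ largePart A y) \ {x + x, w}
  have hsum : surplus A y F x + surplus A y F (x + x) + (surplus A y F z + surplus A y F w) +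
      #R * (y 0 / 4) ≤ ∑ c ∈ A + A, surplus A y F c := by
    simpa [hpair, Finset.sum_pair hxz, hfar, R] using
      h.sum_surplus_add_card_mul_le (R := R) hne Finset.sdiff_subset (by simp [hpair, hfar, R, w])
  have hxthird := h.third_le_surplus_add_farEnd hne hx
  have hzthird := h.third_le_surplus_add_farEnd hne hz
  rw [hfar] at hxthird
  have hsmall : 3 ≤ #(A \ largePart A y) := by
    rw [Finset.card_sdiff_of_subset largePart_subset, hL]
    lia
  by_cases hxx : x + x ∈ A \ largePart A y
  · have hR : 1 ≤ #R := by
      have := Finset.le_card_sdiff {x + x, w} (A \ largePart A y)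
      have := Finset.card_le_two (a := x + x) (b := w)
      lia
    have hR' : (1 : 𝕜) ≤ #R := by exact_mod_cast hR
    have := h.four_ninths_le_surplus_add_self (Finset.mem_of_mem_erase hx) hxx
    nlinarith [h.nonneg 0 h.zero_mem]
  · have hR : 2 ≤ #R := by
      have := Finset.le_card_sdiff {w} (A \ largePart A y)
      rw [Finset.card_singleton, ← Finset.sdiff_insert_of_notMem hxx] at this
      lia
    have hR' : (2 : 𝕜) ≤ #R := by exact_mod_cast hR
    nlinarith [h.nonneg 0 h.zero_mem]

theorem five_mul_sum_le (hA : 6 ≤ #A) : 5 * ∑ x ∈ A, y x ≤ 2 * ∑ c ∈ A + A, F c := by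
  apply h.five_mul_sum_le_of_le_sum_surplus
  rcases lt_trichotomy #(largePart A y) 3 with hlt | heq | hgt
  · exact h.le_sum_surplus_of_card_largePart_le_two hA (by lia)
  · exact h.le_sum_surplus_of_card_largePart_eq_three hA heq
  · exact h.le_sum_surplus_of_four_le_card_largePart hgt

end IsSpreadWeight

end Weights

section Fibers

variable {Z G : Type*} [DecidableEq Z] [DecidableEq G]

/-- The fibre over `c` of a finite set `S` in the product `Z × G`, as a subset of `G`. -/
def fiber (S : Finset (Z × G)) (c : Z) : Finset G := {p ∈ S | p.1 = c}.image Prod.snd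

lemma mem_fiber {S : Finset (Z × G)} {c : Z} {g : G} : g ∈ fiber S c ↔ (c, g) ∈ S := by
  simp [fiber]

lemma fiber_nonempty_iff {S : Finset (Z × G)} {c : Z} :
    (fiber S c).Nonempty ↔ c ∈ S.image Prod.fst := by
  simp [Finset.Nonempty, mem_fiber]

lemma card_eq_sum_card_fiber (S : Finset (Z × G)) :
    #S = ∑ c ∈ S.image Prod.fst, #(fiber S c) := by
  rw [Finset.card_eq_sum_card_image Prod.fst S]
  refine Finset.sum_congr rfl fun c _ ↦ (Finset.card_image_of_injOn fun p hp q hq hpq ↦ ?_).symm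
  simp only [Finset.coe_filter, Set.mem_ofPred_eq] at hp hq
  exact Prod.ext (hp.2.trans hq.2.symm) hpq

lemma image_fst_biUnion_singleton_product {ι : Type*} {I : Finset ι} {B : ι → Finset G} (a : ι → Z)
    (hB : ∀ i ∈ I, (B i).Nonempty) :
    (I.biUnion fun i ↦ {a i} ×ˢ B i).image Prod.fst = I.image a := by
  rw [Finset.biUnion_image, Finset.biUnion_congr rfl fun i hi ↦ Finset.product_image_fst (hB i hi),
    Finset.biUnion_singleton]

lemma fiber_biUnion_singleton_product {ι : Type*} {I : Finset ι} {a : ι → Z} (ha : Set.InjOn a I)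
    (B : ι → Finset G) {i : ι} (hi : i ∈ I) :
    fiber (I.biUnion fun i ↦ {a i} ×ˢ B i) (a i) = B i := by
  ext g
  simp only [mem_fiber, Finset.mem_biUnion, Finset.mem_product, Finset.mem_singleton]
  constructor
  · rintro ⟨j, hj, hij, hg⟩
    rwa [ha hi hj hij]
  · exact fun hg ↦ ⟨i, hi, rfl, hg⟩

lemma card_fiber_add_fiber_le [Add Z] [Add G] (S : Finset (Z × G)) (i j : Z) :
    #(fiber S i + fiber S j) ≤ #(fiber (S + S) (i + j)) := by
  refine Finset.card_le_card fun g hg ↦ ?_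
  obtain ⟨u, hu, v, hv, rfl⟩ := Finset.mem_add.1 hg
  rw [mem_fiber] at hu hv ⊢
  exact Finset.add_mem_add hu hv

lemma fiber_vadd [AddGroup Z] [AddGroup G] (S : Finset (Z × G)) (v c : Z) :
    fiber ((v, (0 : G)) +ᵥ S) (v + c) = fiber S c := by
  ext g
  rw [mem_fiber, mem_fiber, ← Finset.vadd_mem_vadd_finset_iff (v, (0 : G)) (s := S) (b := (c, g))]
  simp

lemma image_fst_vadd [Add Z] [Add G] (S : Finset (Z × G)) (v : Z) (g : G) :
    ((v, g) +ᵥ S).image Prod.fst = v +ᵥ S.image Prod.fst := by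
  simp only [← Finset.image_vadd, Finset.image_image]
  rfl

end Fibers

section SmallDoubling

lemma card_add_trichotomy_of_three_mul_card_le {G : Type*} [AddCommGroup G] [DecidableEq G]
    {X₀ X Y : Finset G} (hX₀ : 3 * #X₀ ≤ 2 * #(X₀ + X₀)) (hXX₀ : #X ≤ #X₀) (hYX : #Y ≤ #X) :
    2 * #X + #Y ≤ 2 * #(X + Y) ∨ 2 * #Y ≤ #(X + Y) ∨
      2 * #X ≤ #(X + X₀) ∧ 2 * #Y ≤ #(Y + X₀) := by
  by_contra! hsmall
  obtain ⟨H, hfin, hcard, hX, hY⟩ := exists_addSubgroup_of_card_add_lt hYX hsmall.1 hsmall.2.1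
  by_cases h₀ : LiesInCoset H X₀
  · have := (h₀.add h₀).card_le
    lia
  · exact (hsmall.2.2 (hX.two_mul_card_le_card_add h₀)).not_ge (hY.two_mul_card_le_card_add h₀)

variable {Z G : Type*} [AddCommGroup G] [DecidableEq G] {S : Finset (Z × G)}

section Weights

variable [AddCommMonoid Z] [DecidableEq Z]

lemma isSumsetWeight_card_fiber (h0 : 0 ∈ S.image Prod.fst)
    (hmax : ∀ c ∈ S.image Prod.fst, #(fiber S c) ≤ #(fiber S 0)) :
    IsSumsetWeight (S.image Prod.fst) (fun c ↦ (#(fiber S c) : ℚ))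
      fun c ↦ (#(fiber (S + S) c) : ℚ) where
  zero_mem := h0
  nonneg _ _ := Nat.cast_nonneg _
  le_zero c hc := by exact_mod_cast hmax c hc
  le_add i _ j hj := by
    exact_mod_cast (Finset.card_le_card_add_right (fiber_nonempty_iff.2 hj)).trans
      (card_fiber_add_fiber_le S i j)

lemma isSpreadWeight_card_fiber (h0 : 0 ∈ S.image Prod.fst)
    (hmax : ∀ c ∈ S.image Prod.fst, #(fiber S c) ≤ #(fiber S 0))
    (hspread : 3 * #(fiber S 0) ≤ 2 * #(fiber S 0 + fiber S 0)) :
    IsSpreadWeight (S.image Prod.fst) (fun c ↦ (#(fiber S c) : ℚ))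
      fun c ↦ (#(fiber (S + S) c) : ℚ) where
  __ := isSumsetWeight_card_fiber h0 hmax
  spread_zero x hx := by
    have hsub := card_fiber_add_fiber_le S x 0
    rw [add_zero] at hsub
    have htri := card_add_trichotomy_of_three_mul_card_le hspread le_rfl (hmax x hx)
    rw [add_comm (fiber S 0) (fiber S x)] at htri
    qify at htri hsub
    rcases htri with htri | htri | htri
    · left; linarith
    · right; linarith
    · right; linarith
  spread_add i hi j _ hji hlarge := by
    have hsub := card_fiber_add_fiber_le S i j
    have hsubi := card_fiber_add_fiber_le S i 0
    have hsubj := card_fiber_add_fiber_le S j 0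
    rw [add_zero] at hsubi hsubj
    have hi0 := hmax i hi
    have htri := card_add_trichotomy_of_three_mul_card_le hspread hi0 (by exact_mod_cast hji)
    qify at htri hsub hsubi hsubj hi0
    rcases htri with htri | htri | htri
    · left; linarith
    · left; linarith
    · right; constructor <;> linarith

lemma not_five_mul_sum_card_fiber_le (hdbl : 2 * #(S + S) < 5 * #S) :
    ¬ 5 * ∑ c ∈ S.image Prod.fst, (#(fiber S c) : ℚ) ≤
      2 * ∑ c ∈ S.image Prod.fst + S.image Prod.fst, (#(fiber (S + S) c) : ℚ) := by
  have himage : (S + S).image Prod.fst = S.image Prod.fst + S.image Prod.fst :=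
    Finset.image_add (AddMonoidHom.fst Z G)
  rw [← himage, ← Nat.cast_sum, ← Nat.cast_sum, ← card_eq_sum_card_fiber,
    ← card_eq_sum_card_fiber, not_le]
  exact_mod_cast hdbl

end Weights

section ZeroMem

variable [AddCommMonoid Z] [LinearOrder Z] [IsOrderedCancelAddMonoid Z]

lemma exists_addSubgroup_forall_liesInCoset_fiber_of_zero_mem (hA : 6 ≤ #(S.image Prod.fst))
    (h0 : 0 ∈ S.image Prod.fst) (hmax : ∀ c ∈ S.image Prod.fst, #(fiber S c) ≤ #(fiber S 0))
    (hdbl : 2 * #(S + S) < 5 * #S) :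
    ∃ H : AddSubgroup G, Finite H ∧ 2 * Nat.card H < 3 * #(fiber S 0) ∧
      ∀ c ∈ S.image Prod.fst, LiesInCoset H (fiber S c) := by
  have hlt : 2 * #(fiber S 0 + fiber S 0) < 3 * #(fiber S 0) := by
    by_contra! hspread
    exact not_five_mul_sum_card_fiber_le hdbl
      ((isSpreadWeight_card_fiber h0 hmax hspread).five_mul_sum_le hA)
  obtain ⟨H, hfin, hcard, hH, -⟩ := exists_addSubgroup_of_card_add_lt le_rfl
    (by lia : 2 * #(fiber S 0 + fiber S 0) < 2 * #(fiber S 0) + #(fiber S 0)) (by lia)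
  refine ⟨H, hfin, by lia, ?_⟩
  classical
  by_contra! hT
  obtain ⟨t, ht, htH⟩ := hT
  refine not_five_mul_sum_card_fiber_le hdbl
    ((isSumsetWeight_card_fiber h0 hmax).five_mul_sum_le_of_two_mul_le
      (T := {c ∈ S.image Prod.fst | ¬ LiesInCoset H (fiber S c)}) hA (Finset.filter_subset _ _)
      ⟨t, Finset.mem_filter.2 ⟨ht, htH⟩⟩ (fun h ↦ (Finset.mem_filter.1 h).2 hH) fun i hi j hj ↦ ?_)
  simp only [Finset.mem_sdiff, Finset.mem_filter, not_and, not_not] at hi hj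
  exact_mod_cast ((hi.2 hi.1).two_mul_card_le_card_add hj.2).trans
    (card_fiber_add_fiber_le S i j)

end ZeroMem

variable [AddCommGroup Z] [LinearOrder Z] [IsOrderedAddMonoid Z]

theorem exists_addSubgroup_forall_liesInCoset_fiber {o : Z} (hA : 6 ≤ #(S.image Prod.fst))
    (ho : o ∈ S.image Prod.fst) (hmax : ∀ c ∈ S.image Prod.fst, #(fiber S c) ≤ #(fiber S o))
    (hdbl : 2 * #(S + S) < 5 * #S) :
    ∃ H : AddSubgroup G, Finite H ∧ 2 * Nat.card H < 3 * #(fiber S o) ∧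
      ∀ c ∈ S.image Prod.fst, LiesInCoset H (fiber S c) := by
  set S' := (-o, (0 : G)) +ᵥ S with hS'
  have hfiber (c : Z) : fiber S' (-o + c) = fiber S c := fiber_vadd S (-o) c
  have hfiber₀ : fiber S' 0 = fiber S o := by rw [← hfiber o, neg_add_cancel]
  have himage : S'.image Prod.fst = -o +ᵥ S.image Prod.fst := image_fst_vadd S (-o) 0
  have hmem {c : Z} (hc : c ∈ S.image Prod.fst) : -o + c ∈ S'.image Prod.fst :=
    himage ▸ Finset.vadd_mem_vadd_finset hc
  obtain ⟨H, hfin, hcard, hH⟩ := exists_addSubgroup_forall_liesInCoset_fiber_of_zero_mem (S := S')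
    (by rwa [himage, Finset.card_vadd_finset]) (neg_add_cancel o ▸ hmem ho)
    (by
      rw [himage, hfiber₀]
      intro c' hc'
      obtain ⟨c, hc, rfl⟩ := Finset.mem_vadd_finset.1 hc'
      exact (congrArg Finset.card (hfiber c)).trans_le (hmax c hc))
    (by rwa [hS', vadd_add_vadd_comm, Finset.card_vadd_finset, Finset.card_vadd_finset])
  exact ⟨H, hfin, hfiber₀ ▸ hcard, fun c hc ↦ hfiber c ▸ hH _ (hmem hc)⟩

theorem all_Bi_in_cosets_of_small_doubling_general {ι : Type*} (I : Finset ι) (hI : 6 ≤ #I)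
    (a : ι → Z) (ha : Set.InjOn a I) (B : ι → Finset G) (hBne : ∀ i ∈ I, (B i).Nonempty) {i₀ : ι}
    (hi₀ : i₀ ∈ I) (hord : ∀ i ∈ I, #(B i) ≤ #(B i₀)) (S : Finset (Z × G))
    (hS : S = I.biUnion fun i ↦ {a i} ×ˢ B i) (hdbl : 2 * #(S + S) < 5 * #S) :
    ∃ H : AddSubgroup G, Finite H ∧ 2 * Nat.card H < 3 * #(B i₀) ∧
      ∀ i ∈ I, LiesInCoset H (B i) := by
  have himage : S.image Prod.fst = I.image a := hS ▸ image_fst_biUnion_singleton_product a hBne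
  have hfiber {i : ι} (hi : i ∈ I) : fiber S (a i) = B i :=
    hS ▸ fiber_biUnion_singleton_product ha B hi
  obtain ⟨H, hfin, hcard, hH⟩ := exists_addSubgroup_forall_liesInCoset_fiber (S := S) (o := a i₀)
    (by rwa [himage, Finset.card_image_of_injOn ha]) (himage ▸ Finset.mem_image_of_mem a hi₀)
    (by
      rw [himage, Finset.forall_mem_image]
      intro i hi
      rw [hfiber hi, hfiber hi₀]
      exact hord i hi)
    hdbl
  refine ⟨H, hfin, hfiber hi₀ ▸ hcard, fun i hi ↦ ?_⟩
  rw [← hfiber hi]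
  exact hH _ (himage ▸ Finset.mem_image_of_mem a hi)

end SmallDoubling

theorem all_Bi_in_cosets_of_small_doubling (s d : ℕ) (hs : 6 ≤ s) (hd : 0 < d)
    (a : ℕ → ℤ) (ha0 : a 0 = 0)
    (hinj : ∀ i < s, ∀ j < s, a i = a j → i = j)
    (hgcd : (Finset.range s).gcd a = 1)
    (B : ℕ → Finset (ZMod d)) (hBne : ∀ i < s, (B i).Nonempty) (h0B : (0 : ZMod d) ∈ B 0)
    (hord : ∀ i < s, (B i).card ≤ (B 0).card)
    (Btil : Finset (ℤ × ZMod d))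
    (hBtil : Btil = (Finset.range s).biUnion (fun i => {a i} ×ˢ B i))
    (hdbl : 2 * (Btil + Btil).card < 5 * Btil.card) :
    ∃ H : AddSubgroup (ZMod d), 2 * Nat.card H < 3 * (B 0).card ∧
      ∀ i < s, ∃ x : ZMod d, ∀ z ∈ B i, z - x ∈ H := by
  obtain ⟨H, -, hcard, hH⟩ := all_Bi_in_cosets_of_small_doubling_general (Finset.range s)
    (by simpa) a (by simpa [Set.InjOn] using hinj) B (by simpa) (i₀ := 0)
    (Finset.mem_range.2 (by lia)) (by simpa) Btil hBtil hdbl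
  exact ⟨H, hcard, fun i hi ↦ hH i (Finset.mem_range.2 hi)⟩
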